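/- Let N ≥ 1 and for each n let b_n ∈ ℝ. Then the product over n of ∫₀^∞ (2πλ)^(−1/2) exp(−(b_n + λ)²/(2λ)) dλ equals exp(−2 · Σ_n max{b_n, 0}). -/

import Mathlib

open MeasureTheory Real Set

/-!
Each factor equals `exp (-2 * max b 0)`; the product formula follows since `exp` turns sums into
products. For a single factor, let `E x = ∫ t in 0..x, exp (-t² / 2)`. The integrand, up to the
constant `√(2π)`, has the explicit primitive
`F l = E (√l + b / √l) + exp (-2b) * E (√l - b / √l)` on `(0, ∞)`: the squares of the two
arguments differ by `4b`, so both Gaussian factors in `F'` coincide, and the two chain-rule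
derivatives add up to `1 / √l` (`hasDerivAt_mixPrim`). The integral is thus the difference of the
limits of `F` at `∞` and at `0⁺` (`tendsto_mixPrim_atTop`, `tendsto_mixPrim_zero`); the limit at
`0⁺` depends on the sign of `b`, which is where `max b 0` comes from. Integrability is automatic
because the integrand is nonnegative.
-/

open Filter Topology

/-- The unnormalised Gaussian error function: the odd primitive of `exp (-t² / 2)`, with limits
`±√(2π) / 2` at `±∞`. -/
noncomputable def gaussPrim (x : ℝ) : ℝ := ∫ t in (0:ℝ)..x, exp (-(1/2) * t ^ 2)

lemma hasDerivAt_gaussPrim (x : ℝ) : HasDerivAt gaussPrim (exp (-(1/2) * x ^ 2)) x := by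
  have hc : Continuous fun t : ℝ => exp (-(1/2) * t ^ 2) := by fun_prop
  exact intervalIntegral.integral_hasDerivAt_right (hc.intervalIntegrable _ _)
    (hc.stronglyMeasurableAtFilter _ _) hc.continuousAt

lemma gaussPrim_neg (x : ℝ) : gaussPrim (-x) = -gaussPrim x := by
  have h := intervalIntegral.integral_comp_neg (a := 0) (b := x)
    (fun t : ℝ => exp (-(1/2) * t ^ 2))
  simp only [neg_sq, neg_zero] at h
  rw [gaussPrim, gaussPrim, h, intervalIntegral.integral_symm]

lemma tendsto_gaussPrim_atTop : Tendsto gaussPrim atTop (𝓝 (√(2 * π) / 2)) := by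
  have h := intervalIntegral_tendsto_integral_Ioi (0:ℝ)
    (integrable_exp_neg_mul_sq (b := 1/2) (by norm_num)).integrableOn tendsto_id
  rw [integral_gaussian_Ioi] at h
  rw [show 2 * π = π / (1 / 2) by ring]
  exact h

lemma tendsto_gaussPrim_atBot : Tendsto gaussPrim atBot (𝓝 (-(√(2 * π) / 2))) := by
  have h := (tendsto_gaussPrim_atTop.comp tendsto_neg_atBot_atTop).neg
  refine h.congr fun x => ?_
  simp [gaussPrim_neg]

lemma hasDerivAt_arg (b : ℝ) {l : ℝ} (hl : 0 < l) :
    HasDerivAt (fun l => √l + b / √l) (1 / (2 * √l) - b / (2 * l * √l)) l := by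
  have h := hasDerivAt_sqrt hl.ne'
  have hs : 0 < √l := sqrt_pos.2 hl
  convert! h.add ((hasDerivAt_const l b).div h hs.ne') using 1
  rw [sq_sqrt hl.le]
  field_simp
  ring

lemma tendsto_arg_atTop (b : ℝ) : Tendsto (fun l => √l + b / √l) atTop atTop :=
  tendsto_sqrt_atTop.atTop_add (tendsto_const_nhds.div_atTop tendsto_sqrt_atTop)

lemma tendsto_inv_sqrt_zero : Tendsto (fun l : ℝ => (√l)⁻¹) (𝓝[>] 0) atTop := by
  refine tendsto_inv_nhdsGT_zero.comp (tendsto_nhdsWithin_iff.2 ⟨?_, ?_⟩)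
  · have := (continuous_sqrt.tendsto 0).mono_left (nhdsWithin_le_nhds (s := Ioi 0))
    simpa using this
  · filter_upwards [self_mem_nhdsWithin] with l hl using sqrt_pos.2 hl

lemma tendsto_sqrt_zero : Tendsto (fun l : ℝ => √l) (𝓝[>] 0) (𝓝 0) := by
  have := (continuous_sqrt.tendsto 0).mono_left (nhdsWithin_le_nhds (s := Ioi 0))
  simpa using this

lemma tendsto_arg_zero_pos {b : ℝ} (hb : 0 < b) :
    Tendsto (fun l => √l + b / √l) (𝓝[>] 0) atTop := by
  simp only [div_eq_mul_inv]
  exact tendsto_sqrt_zero.add_atTop (tendsto_inv_sqrt_zero.const_mul_atTop hb)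

lemma tendsto_arg_zero_neg {b : ℝ} (hb : b < 0) :
    Tendsto (fun l => √l + b / √l) (𝓝[>] 0) atBot := by
  simp only [div_eq_mul_inv]
  exact tendsto_sqrt_zero.add_atBot (tendsto_inv_sqrt_zero.const_mul_atTop_of_neg hb)

/-- A primitive on `(0, ∞)` of `exp (-(b + l)² / (2l)) / √l`. Its value at `l = 0`, where the
divisions by `√l` return `0`, is in general not its limit at `0⁺`. -/
noncomputable def mixPrim (b l : ℝ) : ℝ :=
  gaussPrim (√l + b / √l) + exp (-2 * b) * gaussPrim (√l + -b / √l)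

lemma hasDerivAt_mixPrim (b : ℝ) {l : ℝ} (hl : 0 < l) :
    HasDerivAt (mixPrim b) (exp (-(b + l) ^ 2 / (2 * l)) / √l) l := by
  have hs : 0 < √l := sqrt_pos.2 hl
  have hq : √l ^ 2 = l := sq_sqrt hl.le
  have h := ((hasDerivAt_gaussPrim _).comp l (hasDerivAt_arg b hl)).add
    (((hasDerivAt_gaussPrim _).comp l (hasDerivAt_arg (-b) hl)).const_mul (exp (-2 * b)))
  refine h.congr_deriv ?_
  have e1 : -(1/2) * (√l + b / √l) ^ 2 = -(b + l) ^ 2 / (2 * l) := by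
    rw [show √l + b / √l = (b + l) / √l by field_simp; rw [hq]; ring, div_pow, hq]
    field_simp
  have e2 : -2 * b + -(1/2) * (√l + -b / √l) ^ 2 = -(b + l) ^ 2 / (2 * l) := by
    rw [show √l + -b / √l = (l - b) / √l by field_simp; rw [hq]; ring, div_pow, hq]
    field_simp
    ring
  -- Both terms now carry the same exponential, and the `b`-parts of the inner derivatives cancel.
  rw [← mul_assoc, ← exp_add, e1, e2]
  field_simp
  ring

lemma tendsto_mixPrim_atTop (b : ℝ) :
    Tendsto (mixPrim b) atTop (𝓝 (√(2 * π) / 2 + exp (-2 * b) * (√(2 * π) / 2))) :=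
  (tendsto_gaussPrim_atTop.comp (tendsto_arg_atTop b)).add
    ((tendsto_gaussPrim_atTop.comp (tendsto_arg_atTop (-b))).const_mul _)

/-- The limit of `mixPrim b` at `0⁺`, written as the limit at `∞` minus the value of the integral.
It is obtained separately for `b < 0`, `b = 0` and `b > 0`, since `b / √l` tends to `-∞`, `0`
and `∞` respectively. -/
lemma tendsto_mixPrim_zero (b : ℝ) :
    Tendsto (mixPrim b) (𝓝[>] 0) (𝓝 (√(2 * π) / 2 + exp (-2 * b) * (√(2 * π) / 2)
      - √(2 * π) * exp (-2 * max b 0))) := by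
  rcases lt_trichotomy b 0 with hb | rfl | hb
  · have h := (tendsto_gaussPrim_atBot.comp (tendsto_arg_zero_neg hb)).add
      ((tendsto_gaussPrim_atTop.comp (tendsto_arg_zero_pos (neg_pos.2 hb))).const_mul
        (exp (-2 * b)))
    convert! h using 2
    rw [max_eq_right hb.le, mul_zero, exp_zero]
    ring
  · have h : Tendsto (fun l : ℝ => gaussPrim √l) (𝓝[>] 0) (𝓝 (gaussPrim 0)) :=
      (hasDerivAt_gaussPrim 0).continuousAt.tendsto.comp tendsto_sqrt_zero
    convert! h.add h using 2
    · simp [mixPrim]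
    · simp [gaussPrim]
  · have h := (tendsto_gaussPrim_atTop.comp (tendsto_arg_zero_pos hb)).add
      ((tendsto_gaussPrim_atBot.comp (tendsto_arg_zero_neg (neg_neg_iff_pos.2 hb))).const_mul
        (exp (-2 * b)))
    convert! h using 2
    rw [max_eq_left hb.le]
    ring

lemma integral_mix (b : ℝ) :
    ∫ l in Ioi (0:ℝ), exp (-(b + l) ^ 2 / (2 * l)) / √l = √(2 * π) * exp (-2 * max b 0) := by
  set L := √(2 * π) / 2 + exp (-2 * b) * (√(2 * π) / 2) - √(2 * π) * exp (-2 * max b 0) with hL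
  -- The value at `0` is replaced by the right limit `L` to make the primitive continuous there.
  have h := integral_Ioi_of_hasDerivAt_of_nonneg (g := Function.update (mixPrim b) 0 L)
    (g' := fun l => exp (-(b + l) ^ 2 / (2 * l)) / √l) (a := 0)
    (l := √(2 * π) / 2 + exp (-2 * b) * (√(2 * π) / 2)) ?_ ?_ ?_ ?_
  · rw [h, Function.update_self, hL]
    ring
  · rw [continuousWithinAt_update_same, Ici_sdiff_left]
    exact tendsto_mixPrim_zero b
  · intro x hx
    refine (hasDerivAt_mixPrim b hx).congr_of_eventuallyEq ?_
    filter_upwards [eventually_ne_nhds (ne_of_gt hx)] with y hy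
    exact Function.update_of_ne hy _ _
  · intro x _
    positivity
  · refine (tendsto_mixPrim_atTop b).congr' ?_
    filter_upwards [eventually_ne_atTop 0] with y hy
    exact (Function.update_of_ne hy _ _).symm

/-- The Gaussian location-scale mixture representation of the exponentiated hinge loss. -/
lemma integral_factor (b : ℝ) :
    ∫ l in Ioi (0:ℝ), (2 * π * l) ^ (-(1:ℝ)/2) * exp (-(b + l) ^ 2 / (2 * l)) =
      exp (-2 * max b 0) := by
  have h2 : 0 < √(2 * π) := by positivity
  have h : ∀ l ∈ Ioi (0:ℝ), (2 * π * l) ^ (-(1:ℝ)/2) * exp (-(b + l) ^ 2 / (2 * l)) =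
      (√(2 * π))⁻¹ * (exp (-(b + l) ^ 2 / (2 * l)) / √l) := by
    intro l hl
    have hl' : (0:ℝ) < l := hl
    rw [neg_div, rpow_neg (by positivity), ← sqrt_eq_rpow, sqrt_mul (by positivity), mul_inv]
    ring
  rw [setIntegral_congr_fun measurableSet_Ioi h, integral_const_mul, integral_mix]
  field_simp

theorem product_pseudo_likelihood (N : ℕ) (hN : 1 ≤ N) (b : Fin N → ℝ) :
    ∏ n : Fin N, ∫ l in Ioi (0:ℝ), (2 * π * l) ^ (-(1:ℝ)/2) *
      Real.exp (-(b n + l) ^ 2 / (2 * l)) =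
      Real.exp (-2 * ∑ n : Fin N, max (b n) 0) := by
  simp only [integral_factor]
  rw [← exp_sum, Finset.mul_sum]
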